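/- arXiv:1511.07585 — 4 statements merged into one kernel-verified Lean document; each statement's English description precedes it below -/
import Mathlib

section
/- (Theorem 1, necessity direction.) Consider the parameterized control system ẋ = g(x, u(t), p(t)) where g : ℝⁿ × ℝᵐ × ℝᵖ → ℝⁿ is continuously differentiable and Lipschitz continuous in its first argument uniformly in the others. Suppose the system is monotone parameterized with respect to p: for every t ≥ 0, every piecewise continuous control u, all piecewise continuous parameter functions p₁ ≤ p₂ pointwise on [0,t], and all initial conditions y₁ ≤ y₂ componentwise, the corresponding solutions satisfy x₁(t) ≤ x₂(t) componentwise. Then at every point (x,u,p) ∈ ℝⁿ × ℝᵐ × ℝᵖ the Jacobian ∇ₓg is Metzler (∂gᵢ/∂xⱼ(x,u,p) ≥ 0 for all i ≠ j) and the Jacobian ∇ₚg is entrywise nonnegative (∂gᵢ/∂pₖ(x,u,p) ≥ 0 for all i, k). -/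
open Set

/-- A function is piecewise continuous on a set if it is continuous off a finite set of points. -/
def PiecewiseContinuousOn {E : Type*} [TopologicalSpace E] (f : ℝ → E) (s : Set ℝ) : Prop :=
  ∃ D : Finset ℝ, ContinuousOn f (s \ (D : Set ℝ))

/-!
Fix constant values of the control and the parameters. If `x ≤ x'`, `q ≤ q'` and `xᵢ = x'ᵢ`, the
solutions issued from `(x, q)` and `(x', q')` exist for a short time and stay ordered, while their
`i`-th coordinates start at the same value. Comparing the right derivatives of these coordinates at
time `0` gives `gᵢ(x, u, q) ≤ gᵢ(x', u, q')`. Hence `gᵢ` is monotone in each `xⱼ` with `j ≠ i` and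
in each `qₖ`, and the corresponding partial derivatives are nonnegative.
-/

open Filter Topology

theorem le_of_hasDerivWithinAt_Ioi_of_frequently_le {f g : ℝ → ℝ} {f' g' a : ℝ}
    (hf : HasDerivWithinAt f f' (Ioi a) a) (hg : HasDerivWithinAt g g' (Ioi a) a)
    (ha : g a ≤ f a) (hle : ∃ᶠ t in 𝓝[>] a, f t ≤ g t) : f' ≤ g' := by
  rw [hasDerivWithinAt_iff_tendsto_slope' self_notMem_Ioi] at hf hg
  refine le_of_tendsto_of_tendsto_of_frequently hf hg ?_
  refine (hle.and_eventually self_mem_nhdsWithin).mono fun t ⟨hfg, hat⟩ => ?_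
  simp only [slope_def_field]
  exact div_le_div_of_nonneg_right (sub_le_sub hfg ha) (sub_nonneg.2 (le_of_lt hat))

theorem exists_eventually_forall_mem_Icc_hasDerivAt
    {E : Type*} [NormedAddCommGroup E] [NormedSpace ℝ E] [CompleteSpace E]
    {v : E → E} {x₀ : E} (hv : ContDiffAt ℝ 1 v x₀) (t₀ : ℝ) :
    ∃ α : ℝ → E, α t₀ = x₀ ∧ ∀ᶠ t in 𝓝 t₀, ∀ s ∈ Icc t₀ t, HasDerivAt α (v (α s)) s := by
  obtain ⟨α, hα₀, ε, hε, hα⟩ :=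
    hv.exists_forall_mem_closedBall_exists_eq_forall_mem_Ioo_hasDerivAt₀ t₀
  refine ⟨α, hα₀, ?_⟩
  filter_upwards [Iio_mem_nhds (lt_add_of_pos_right t₀ hε)] with t ht s hs
  exact hα s ⟨(sub_lt_self t₀ hε).trans_le hs.1, hs.2.trans_lt ht⟩

/-- Monotonicity of the parameterized system `ẋ = f(x, q)`, tested only on parameters that are
constant in time: solutions preserve the order of the initial states and of the parameters. -/
def IsMonotoneForConstantParameters {E P : Type*} [NormedAddCommGroup E] [NormedSpace ℝ E] [LE E]
    [LE P] (f : E → P → E) : Prop :=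
  ∀ t : ℝ, 0 ≤ t → ∀ q₁ q₂ : P, q₁ ≤ q₂ → ∀ x₁ x₂ : ℝ → E,
    (∀ s ∈ Icc 0 t, HasDerivAt x₁ (f (x₁ s) q₁) s) →
    (∀ s ∈ Icc 0 t, HasDerivAt x₂ (f (x₂ s) q₂) s) →
    x₁ 0 ≤ x₂ 0 → x₁ t ≤ x₂ t

/-- The Kamke–Müller condition (quasimonotonicity) for a parameterized vector field: the `i`-th
component grows with the parameter and with the state, as long as the `i`-th coordinate of the
state is kept fixed. It is the derivative-free form of the sign conditions on the Jacobians. -/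
def KamkeCondition {ι α P : Type*} [LE α] [LE P] (f : (ι → α) → P → ι → α) : Prop :=
  ∀ ⦃x x' : ι → α⦄ ⦃q q' : P⦄ ⦃i : ι⦄, x ≤ x' → q ≤ q' → x i = x' i → f x q i ≤ f x' q' i

namespace KamkeCondition

variable {ι α P : Type*} [Preorder α] [Preorder P] {f : (ι → α) → P → ι → α}

theorem monotone_update [DecidableEq ι] (hf : KamkeCondition f) (x : ι → α) (q : P) {i j : ι}
    (hij : i ≠ j) : Monotone fun s => f (Function.update x j s) q i := fun _ _ hs =>
  hf (Function.update_mono hs) le_rfl (by simp only [Function.update_of_ne hij])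

theorem monotone_parameter (hf : KamkeCondition f) (x : ι → α) (i : ι) :
    Monotone fun q => f x q i :=
  fun _ _ hq => hf le_rfl hq rfl

end KamkeCondition

theorem IsMonotoneForConstantParameters.kamkeCondition {ι P : Type*} [Fintype ι] [LE P]
    {f : (ι → ℝ) → P → ι → ℝ} (hmono : IsMonotoneForConstantParameters f)
    (hf : ∀ q, ContDiff ℝ 1 fun x => f x q) : KamkeCondition f := by
  intro x x' q q' i hx hq hi
  obtain ⟨a, rfl, ha⟩ := exists_eventually_forall_mem_Icc_hasDerivAt (x₀ := x) (hf q).contDiffAt 0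
  obtain ⟨b, rfl, hb⟩ := exists_eventually_forall_mem_Icc_hasDerivAt (x₀ := x') (hf q').contDiffAt 0
  have ha' : HasDerivAt (fun t => a t i) (f (a 0) q i) 0 :=
    hasDerivAt_pi.1 (ha.self_of_nhds 0 (left_mem_Icc.2 le_rfl)) i
  have hb' : HasDerivAt (fun t => b t i) (f (b 0) q' i) 0 :=
    hasDerivAt_pi.1 (hb.self_of_nhds 0 (left_mem_Icc.2 le_rfl)) i
  have hab : ∀ᶠ t in 𝓝[>] 0, a t i ≤ b t i := by
    filter_upwards [nhdsWithin_le_nhds ha, nhdsWithin_le_nhds hb, self_mem_nhdsWithin]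
      with t hat hbt ht
    exact hmono t (le_of_lt ht) q q' hq a b hat hbt hx i
  exact le_of_hasDerivWithinAt_Ioi_of_frequently_le ha'.hasDerivWithinAt hb'.hasDerivWithinAt
    hi.ge hab.frequently

theorem piecewiseContinuousOn_const {E : Type*} [TopologicalSpace E] (c : E) (s : Set ℝ) :
    PiecewiseContinuousOn (fun _ => c) s :=
  ⟨∅, continuousOn_const⟩

theorem metzler_and_nonneg_of_monotone_parameterized_general
    {ι κ U : Type*} [Fintype ι] [DecidableEq ι] [Fintype κ] [DecidableEq κ]
    (g : (ι → ℝ) → U → (κ → ℝ) → ι → ℝ)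
    (hg : ∀ u, ContDiff ℝ 1 fun z : (ι → ℝ) × (κ → ℝ) => g z.1 u z.2)
    (hmono : ∀ u, IsMonotoneForConstantParameters fun x q => g x u q) :
    (∀ x u q, ∀ i j : ι, i ≠ j →
      0 ≤ deriv (fun s : ℝ => g (Function.update x j s) u q i) (x j)) ∧
    (∀ x u q, ∀ (i : ι) (k : κ),
      0 ≤ deriv (fun s : ℝ => g x u (Function.update q k s) i) (q k)) := by
  have kamke (u : U) : KamkeCondition fun x q => g x u q :=
    (hmono u).kamkeCondition fun q => (hg u).comp (contDiff_prodMk_left q)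
  exact ⟨fun x u q i j hij => ((kamke u).monotone_update x q hij).deriv_nonneg,
    fun x u q i k => (((kamke u).monotone_parameter x i).comp Function.update_mono).deriv_nonneg⟩

/-- Theorem 1 (necessity): if the parameterized control system `ẋ = g(x, u(t), p(t))` is
monotone parameterized with respect to `p`, then at every point the state Jacobian of `g` is
Metzler and the parameter Jacobian of `g` is entrywise nonnegative. -/
theorem metzler_and_nonneg_of_monotone_parameterized
    (n m d : ℕ)
    (g : (Fin n → ℝ) → (Fin m → ℝ) → (Fin d → ℝ) → (Fin n → ℝ))
    (hg : ContDiff ℝ 1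
      (fun z : (Fin n → ℝ) × (Fin m → ℝ) × (Fin d → ℝ) => g z.1 z.2.1 z.2.2))
    (K : NNReal)
    (hLip : ∀ (u : Fin m → ℝ) (q : Fin d → ℝ), LipschitzWith K (fun x => g x u q))
    (hmono : ∀ t : ℝ, 0 ≤ t →
      ∀ u : ℝ → Fin m → ℝ, PiecewiseContinuousOn u (Icc 0 t) →
      ∀ p₁ p₂ : ℝ → Fin d → ℝ,
        PiecewiseContinuousOn p₁ (Icc 0 t) → PiecewiseContinuousOn p₂ (Icc 0 t) →
        (∀ s ∈ Icc 0 t, p₁ s ≤ p₂ s) →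
      ∀ x₁ x₂ : ℝ → Fin n → ℝ,
        (∀ s ∈ Icc 0 t, HasDerivAt x₁ (g (x₁ s) (u s) (p₁ s)) s) →
        (∀ s ∈ Icc 0 t, HasDerivAt x₂ (g (x₂ s) (u s) (p₂ s)) s) →
        x₁ 0 ≤ x₂ 0 → x₁ t ≤ x₂ t) :
    (∀ (x : Fin n → ℝ) (u : Fin m → ℝ) (q : Fin d → ℝ), ∀ i j : Fin n, i ≠ j →
      0 ≤ deriv (fun s : ℝ => g (Function.update x j s) u q i) (x j)) ∧
    (∀ (x : Fin n → ℝ) (u : Fin m → ℝ) (q : Fin d → ℝ), ∀ (i : Fin n) (k : Fin d),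
      0 ≤ deriv (fun s : ℝ => g x u (Function.update q k s) i) (q k)) :=
  metzler_and_nonneg_of_monotone_parameterized_general g
    (fun _ => hg.comp (contDiff_fst.prodMk (contDiff_const.prodMk contDiff_snd)))
    fun u t ht q₁ q₂ hq => hmono t ht _ (piecewiseContinuousOn_const u _) _ _
      (piecewiseContinuousOn_const q₁ _) (piecewiseContinuousOn_const q₂ _) fun _ _ => hq
end

section
/- (Proposition 1: Monotonicity of nodal flow dynamics.) Suppose each dissipation function f_{ij}(t,u,v) is differentiable and strictly increasing in its last argument, i.e. ∂f_{ij}/∂v(t,u,v) > 0 for all (t,u,v), and suppose the right-hand side g(t,·,q(t)) is Lipschitz in ρ so that solutions are unique. Let q¹, q² : [0,T] → ℝ^V be continuous injection vectors and let ρ¹, ρ² : [0,T] → ℝ^V solve the nodal network flow dynamics with injections q¹ and q² respectively (with the same compression ratio functions ᾱ_{ij}, α̲_{ij}). If ρ¹(0) ≤ ρ²(0) componentwise and q¹(s) ≤ q²(s) componentwise for all s ∈ [0,t], then ρ¹(t) ≤ ρ²(t) componentwise. -/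
/-!
Inflows along edges increase with the neighbouring densities, so the right-hand side is
quasimonotone: raising the other coordinates of the state raises the velocity of a coordinate. A
subsolution `x` of a quasimonotone system cannot overtake a strict supersolution `z`, because
wherever a coordinate of `x` catches up with `z` it has the smaller velocity. A supersolution `y` is
made strict by adding `η * exp ((K + 1) * (s - b))` to every coordinate: this perturbation grows at
rate `K + 1`, while the right-hand side, being `K`-Lipschitz, responds to it at rate at most `K`.
Letting `η` tend to zero gives `x ≤ y`. Finally, with respect to the larger injections, a solution
for the smaller injections is a subsolution.
-/

section Quasimonotone

open Set Filter Topology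

/-- The Müller–Kamke condition on a vector field: the `i`-th component is monotone in the
coordinates other than `i`. It is what makes the flow of the field order preserving. -/
def Quasimonotone {ι α β : Type*} [Preorder α] [Preorder β] (F : (ι → α) → ι → β) : Prop :=
  ∀ ⦃x y : ι → α⦄ ⦃i : ι⦄, x ≤ y → x i = y i → F x i ≤ F y i

theorem eventually_nhdsGT_lt_of_deriv_lt {u v : ℝ → ℝ} {u' v' s : ℝ}
    (hu : HasDerivWithinAt u u' (Ici s) s) (hv : HasDerivWithinAt v v' (Ici s) s)
    (huv : u s ≤ v s) (huv' : u s = v s → u' < v') : ∀ᶠ t in 𝓝[>] s, u t < v t := by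
  have hu := hu.Ioi_of_Ici
  have hv := hv.Ioi_of_Ici
  rcases huv.lt_or_eq with hlt | heq
  · exact hu.continuousWithinAt.tendsto.eventually_lt hv.continuousWithinAt.tendsto hlt
  · have hslope : ∀ᶠ t in 𝓝[>] s, 0 < slope (v - u) s t :=
      ((hasDerivWithinAt_iff_tendsto_slope' self_notMem_Ioi).1 (hv.sub hu)).eventually_const_lt
        (sub_pos.2 (huv' heq))
    filter_upwards [hslope, self_mem_nhdsWithin] with t hpos hst
    simpa [heq] using (slope_pos_iff_of_le (le_of_lt hst)).1 hpos

variable {ι : Type*} {F : ℝ → (ι → ℝ) → ι → ℝ} {x x' y y' z z' : ℝ → ι → ℝ} {a b : ℝ}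

theorem subsolution_le_strict_supersolution_of_quasimonotone [Finite ι]
    (hF : ∀ s ∈ Ico a b, Quasimonotone (F s))
    (hx : ContinuousOn x (Icc a b)) (hx' : ∀ s ∈ Ico a b, HasDerivWithinAt x (x' s) (Ici s) s)
    (hz : ContinuousOn z (Icc a b)) (hz' : ∀ s ∈ Ico a b, HasDerivWithinAt z (z' s) (Ici s) s)
    (hxF : ∀ s ∈ Ico a b, x' s ≤ F s (x s)) (hzF : ∀ s ∈ Ico a b, ∀ i, F s (z s) i < z' s i)
    (ha : x a ≤ z a) : ∀ t ∈ Icc a b, x t ≤ z t := by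
  have := Fintype.ofFinite ι
  have hclosed : IsClosed ({s | x s ≤ z s} ∩ Icc a b) := by
    rw [inter_comm]
    exact isClosed_Icc.isClosed_le hx hz
  refine hclosed.Icc_subset_of_forall_exists_gt ha fun s ⟨hle, hs⟩ t hst => ?_
  have hright : ∀ᶠ u in 𝓝[>] s, ∀ i, x u i < z u i :=
    eventually_all.2 fun i => eventually_nhdsGT_lt_of_deriv_lt
      (hasDerivWithinAt_pi.1 (hx' s hs) i) (hasDerivWithinAt_pi.1 (hz' s hs) i) (hle i)
      fun heq => (hxF s hs i).trans_lt ((hF s hs hle heq).trans_lt (hzF s hs i))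
  obtain ⟨u, hu, hsu⟩ := (hright.and (Ioc_mem_nhdsGT hst)).exists
  exact ⟨u, fun i => (hu i).le, hsu⟩

variable [Fintype ι]

theorem apply_add_const_le_of_lipschitzOnWith {G : (ι → ℝ) → ι → ℝ} {K : NNReal} {r c : ℝ}
    {p : ι → ℝ} (hG : LipschitzOnWith K G (Metric.closedBall p r)) (hc : 0 ≤ c) (hcr : c ≤ r)
    (i : ι) : G (p + Function.const ι c) i ≤ G p i + K * c := by
  have hdist : dist (p + Function.const ι c) p ≤ c := by
    simpa [Function.const_def, abs_of_nonneg hc] using pi_norm_const_le (ι := ι) c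
  have hchange : dist (G (p + Function.const ι c) i) (G p i) ≤ K * c :=
    calc dist (G (p + Function.const ι c) i) (G p i)
        ≤ dist (G (p + Function.const ι c)) (G p) := dist_le_pi_dist _ _ i
      _ ≤ K * dist (p + Function.const ι c) p :=
        hG.dist_le_mul _ (hdist.trans hcr) _ (Metric.mem_closedBall_self (hc.trans hcr))
      _ ≤ K * c := by gcongr
  linarith [le_of_abs_le (Real.dist_eq _ _ ▸ hchange)]

theorem subsolution_le_supersolution_of_quasimonotone {K : NNReal} {r : ℝ} (hr : 0 < r)
    (hF : ∀ s ∈ Ico a b, Quasimonotone (F s))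
    (hLip : ∀ s ∈ Ico a b, LipschitzOnWith K (F s) (Metric.closedBall (y s) r))
    (hx : ContinuousOn x (Icc a b)) (hx' : ∀ s ∈ Ico a b, HasDerivWithinAt x (x' s) (Ici s) s)
    (hy : ContinuousOn y (Icc a b)) (hy' : ∀ s ∈ Ico a b, HasDerivWithinAt y (y' s) (Ici s) s)
    (hxF : ∀ s ∈ Ico a b, x' s ≤ F s (x s)) (hyF : ∀ s ∈ Ico a b, F s (y s) ≤ y' s)
    (ha : x a ≤ y a) : ∀ t ∈ Icc a b, x t ≤ y t := by
  suffices hη : ∀ η > 0, η ≤ r → ∀ t ∈ Icc a b, ∀ i, x t i ≤ y t i + η by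
    refine fun t ht i => le_of_forall_pos_le_add fun δ hδ => ?_
    exact (hη (min δ r) (lt_min hδ hr) (min_le_right δ r) t ht i).trans
      (by gcongr; exact min_le_left δ r)
  intro η hη hηr t ht i
  let c : ℝ → ℝ := fun s => η * Real.exp ((K + 1) * (s - b))
  have hc_pos (s : ℝ) : 0 < c s := by positivity
  have hc_le {s : ℝ} (hs : s ≤ b) : c s ≤ η :=
    mul_le_of_le_one_right hη.le
      (Real.exp_le_one_iff.2 (mul_nonpos_of_nonneg_of_nonpos (by positivity) (sub_nonpos.2 hs)))
  have hc_deriv (s : ℝ) : HasDerivAt c ((K + 1) * c s) s := by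
    have := ((((hasDerivAt_id s).sub_const b).const_mul ((K : ℝ) + 1)).exp).const_mul η
    exact this.congr_deriv (by simp only [c, id]; ring)
  let C : ℝ → ι → ℝ := fun s => Function.const ι (c s)
  have hC_deriv (s : ℝ) : HasDerivAt C (Function.const ι ((K + 1) * c s)) s :=
    hasDerivAt_pi.2 fun _ => hc_deriv s
  have hstrict : ∀ s ∈ Ico a b, ∀ i, F s (y s + C s) i < y' s i + (K + 1) * c s := fun s hs i =>
    calc F s (y s + C s) i
        ≤ F s (y s) i + K * c s :=
          apply_add_const_le_of_lipschitzOnWith (hLip s hs) (hc_pos s).le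
            ((hc_le hs.2.le).trans hηr) i
      _ < y' s i + (K + 1) * c s := by linarith [hyF s hs i, hc_pos s]
  have hle : x t ≤ y t + C t :=
    subsolution_le_strict_supersolution_of_quasimonotone hF hx hx'
      (hy.add fun s _ => (hC_deriv s).continuousAt.continuousWithinAt)
      (fun s hs => (hy' s hs).add (hC_deriv s).hasDerivWithinAt) hxF hstrict
      (fun i => (ha i).trans (le_add_of_nonneg_right (hc_pos a).le)) t ht
  exact (hle i).trans (add_le_add le_rfl (hc_le ht.2))

end Quasimonotone

section NodalDynamics

variable {V : Type*} [Fintype V] [DecidableEq V] {E : Finset (V × V)} {ℓ : ℝ}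

/-- The aggregated actuation `α j` of node `j` at a fixed time, the sum of the compression ratios at
its end of each incident edge. -/
def nodalActuation (E : Finset (V × V)) (abar aund : V × V → ℝ) (j : V) : ℝ :=
  (∑ i with (i, j) ∈ E, abar (i, j)) + ∑ k with (j, k) ∈ E, aund (j, k)

/-- The net flow received by node `j` through its incident edges at a fixed time, where `abar e`
and `aund e` are the compression ratios at the second and at the first node of the edge `e`. The
flow given by the dissipation function `φ e` is counted as positive from the second node of `e` to
the first. -/
noncomputable def nodalInflow (E : Finset (V × V)) (ℓ : ℝ) (abar aund : V × V → ℝ)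
    (φ : V × V → ℝ → ℝ → ℝ) (ρ : V → ℝ) (j : V) : ℝ :=
  (∑ k with (j, k) ∈ E,
      φ (j, k) (aund (j, k) * ρ j) ((abar (j, k) * ρ k - aund (j, k) * ρ j) / ℓ)) -
    ∑ i with (i, j) ∈ E,
      φ (i, j) (abar (i, j) * ρ j) ((abar (i, j) * ρ j - aund (i, j) * ρ i) / ℓ)

/-- The right-hand side of the nodal network flow dynamics at a fixed time. The factors
`2 / (ℓ * α j)` and `α̇ j / α j` of the paper are arbitrary weights `w j` and decay rates `d j`. -/
noncomputable def nodalVelocity (E : Finset (V × V)) (ℓ : ℝ) (w d : V → ℝ) (abar aund : V × V → ℝ)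
    (φ : V × V → ℝ → ℝ → ℝ) (ρ q : V → ℝ) (j : V) : ℝ :=
  w j * (nodalInflow E ℓ abar aund φ ρ j + q j) - d j * ρ j

variable {w d : V → ℝ} {abar aund : V × V → ℝ} {φ : V × V → ℝ → ℝ → ℝ}

theorem nodalActuation_nonneg (habar : ∀ e ∈ E, 0 ≤ abar e) (haund : ∀ e ∈ E, 0 ≤ aund e)
    (j : V) : 0 ≤ nodalActuation E abar aund j :=
  add_nonneg (Finset.sum_nonneg fun _ hi => habar _ (Finset.mem_filter.1 hi).2)
    (Finset.sum_nonneg fun _ hk => haund _ (Finset.mem_filter.1 hk).2)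

theorem quasimonotone_nodalInflow (hℓ : 0 ≤ ℓ) (habar : ∀ e ∈ E, 0 ≤ abar e)
    (haund : ∀ e ∈ E, 0 ≤ aund e) (hφ : ∀ e ∈ E, ∀ u, Monotone (φ e u)) :
    Quasimonotone (nodalInflow E ℓ abar aund φ) := by
  intro x y j hxy hj
  simp only [nodalInflow, hj]
  refine sub_le_sub (Finset.sum_le_sum fun k hk => ?_) (Finset.sum_le_sum fun i hi => ?_)
  · have he : (j, k) ∈ E := (Finset.mem_filter.1 hk).2
    have hterm := mul_le_mul_of_nonneg_left (hxy k) (habar _ he)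
    exact hφ _ he _ (by gcongr)
  · have he : (i, j) ∈ E := (Finset.mem_filter.1 hi).2
    have hterm := mul_le_mul_of_nonneg_left (hxy i) (haund _ he)
    exact hφ _ he _ (by gcongr)

theorem quasimonotone_nodalVelocity (hℓ : 0 ≤ ℓ) (hw : ∀ j, 0 ≤ w j)
    (habar : ∀ e ∈ E, 0 ≤ abar e) (haund : ∀ e ∈ E, 0 ≤ aund e)
    (hφ : ∀ e ∈ E, ∀ u, Monotone (φ e u)) (q : V → ℝ) :
    Quasimonotone fun ρ => nodalVelocity E ℓ w d abar aund φ ρ q := by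
  intro x y j hxy hj
  have hinflow := quasimonotone_nodalInflow hℓ habar haund hφ hxy hj
  simp only [nodalVelocity, hj]
  have hwj := hw j
  gcongr

theorem monotone_nodalVelocity_injection (hw : ∀ j, 0 ≤ w j) (ρ : V → ℝ) :
    Monotone (nodalVelocity E ℓ w d abar aund φ ρ) := by
  intro q₁ q₂ hq j
  have hwj := hw j
  have hqj := hq j
  simp only [nodalVelocity]
  gcongr

end NodalDynamics

theorem nodal_dynamics_monotone_in_injections_general {V : Type*} [Fintype V] [DecidableEq V]
    {E : Finset (V × V)} {ℓ a b : ℝ} (hℓ : 0 < ℓ) {w d : ℝ → V → ℝ} {abar aund : ℝ → V × V → ℝ}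
    {φ : ℝ → V × V → ℝ → ℝ → ℝ} (hw : ∀ s ∈ Set.Ico a b, ∀ j, 0 ≤ w s j)
    (habar : ∀ s ∈ Set.Ico a b, ∀ e ∈ E, 0 ≤ abar s e)
    (haund : ∀ s ∈ Set.Ico a b, ∀ e ∈ E, 0 ≤ aund s e)
    (hφ : ∀ s ∈ Set.Ico a b, ∀ e ∈ E, ∀ u, Monotone (φ s e u)) {q₁ q₂ ρ₁ ρ₂ : ℝ → V → ℝ}
    (hLip : ∀ R : ℝ, ∃ K : NNReal, ∀ s ∈ Set.Ico a b, LipschitzOnWith K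
      (fun ρ => nodalVelocity E ℓ (w s) (d s) (abar s) (aund s) (φ s) ρ (q₂ s))
      (Metric.closedBall 0 R))
    (hρ₁ : ContinuousOn ρ₁ (Set.Icc a b))
    (hρ₁' : ∀ s ∈ Set.Ico a b, HasDerivWithinAt ρ₁
      (nodalVelocity E ℓ (w s) (d s) (abar s) (aund s) (φ s) (ρ₁ s) (q₁ s)) (Set.Ici s) s)
    (hρ₂ : ContinuousOn ρ₂ (Set.Icc a b))
    (hρ₂' : ∀ s ∈ Set.Ico a b, HasDerivWithinAt ρ₂
      (nodalVelocity E ℓ (w s) (d s) (abar s) (aund s) (φ s) (ρ₂ s) (q₂ s)) (Set.Ici s) s)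
    (ha : ρ₁ a ≤ ρ₂ a) (hq : ∀ s ∈ Set.Ico a b, q₁ s ≤ q₂ s) :
    ∀ t ∈ Set.Icc a b, ρ₁ t ≤ ρ₂ t := by
  obtain ⟨C, hC⟩ := isCompact_Icc.exists_bound_of_continuousOn hρ₂
  obtain ⟨K, hK⟩ := hLip (1 + C)
  have hball : ∀ s ∈ Set.Ico a b, Metric.closedBall (ρ₂ s) 1 ⊆ Metric.closedBall 0 (1 + C) :=
    fun s hs => Metric.closedBall_subset_closedBall'
      (by simpa using hC s (Set.Ico_subset_Icc_self hs))
  exact subsolution_le_supersolution_of_quasimonotone one_pos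
    (fun s hs => quasimonotone_nodalVelocity hℓ.le (hw s hs) (habar s hs) (haund s hs) (hφ s hs) _)
    (fun s hs => (hK s hs).mono (hball s hs)) hρ₁ hρ₁' hρ₂ hρ₂'
    (fun s hs => monotone_nodalVelocity_injection (hw s hs) _ (hq s hs)) (fun _ _ => le_rfl) ha

/-- Proposition 1 (monotonicity of nodal flow dynamics): if each dissipation function is
strictly increasing in its last argument and the right-hand side is Lipschitz in the state,
then ordered initial densities and pointwise-ordered injections yield ordered densities. -/
theorem nodal_dynamics_monotone_in_injections
    (V : Type*) [Fintype V] [DecidableEq V]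
    (E : Finset (V × V))
    (hE_noloop : ∀ e ∈ E, e.1 ≠ e.2)
    (hE_inc : ∀ j : V, (∃ i, (i, j) ∈ E) ∨ (∃ k, (j, k) ∈ E))
    (ℓ T : ℝ) (hℓ : 0 < ℓ) (hT : 0 < T)
    -- compression ratio functions ᾱ (abar) and α̲ (aund), C¹ and strictly positive on [0,T]
    (abar aund : V × V → ℝ → ℝ)
    (habar : ∀ e ∈ E, ContDiff ℝ 1 (abar e) ∧ ∀ t ∈ Set.Icc (0:ℝ) T, 0 < abar e t)
    (haund : ∀ e ∈ E, ContDiff ℝ 1 (aund e) ∧ ∀ t ∈ Set.Icc (0:ℝ) T, 0 < aund e t)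
    -- differentiable dissipation functions f_{ij}(t,u,v)
    (f : V × V → ℝ → ℝ → ℝ → ℝ)
    (hf : ∀ e ∈ E, Differentiable ℝ (fun z : ℝ × ℝ × ℝ => f e z.1 z.2.1 z.2.2))
    -- aggregated nodal actuation α_j(t)
    (A : V → ℝ → ℝ)
    (hA : ∀ (j : V) (t : ℝ), A j t =
      (∑ i ∈ Finset.univ.filter (fun i : V => (i, j) ∈ E), abar (i, j) t) +
      (∑ k ∈ Finset.univ.filter (fun k : V => (j, k) ∈ E), aund (j, k) t))
    -- the nodal network flow dynamics ρ̇_j = g_j(t, ρ, q)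
    (g : ℝ → (V → ℝ) → (V → ℝ) → V → ℝ)
    (hg : ∀ (t : ℝ) (ρ qv : V → ℝ) (j : V), g t ρ qv j =
      (2 / (ℓ * A j t)) *
        ((∑ k ∈ Finset.univ.filter (fun k : V => (j, k) ∈ E),
            f (j, k) t (aund (j, k) t * ρ j)
              ((abar (j, k) t * ρ k - aund (j, k) t * ρ j) / ℓ)) -
         (∑ i ∈ Finset.univ.filter (fun i : V => (i, j) ∈ E),
            f (i, j) t (abar (i, j) t * ρ j)
              ((abar (i, j) t * ρ j - aund (i, j) t * ρ i) / ℓ)) +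
         qv j) -
      (deriv (A j) t / A j t) * ρ j)
    -- each dissipation function is strictly increasing in its last argument
    (hf_incr : ∀ e ∈ E, ∀ t ∈ Set.Icc (0:ℝ) T, ∀ u v : ℝ,
      0 < deriv (fun w : ℝ => f e t u w) v)
    -- Lipschitz continuity of the right-hand side in ρ (solutions are unique)
    (K : NNReal)
    (hLip : ∀ t ∈ Set.Icc (0:ℝ) T, ∀ qv : V → ℝ, LipschitzWith K (fun ρ => g t ρ qv))
    -- two continuous injection profiles and corresponding solutions
    (q₁ q₂ : ℝ → V → ℝ) (hq₁ : Continuous q₁) (hq₂ : Continuous q₂)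
    (ρ₁ ρ₂ : ℝ → V → ℝ)
    (hρ₁ : ∀ s ∈ Set.Icc (0:ℝ) T, HasDerivAt ρ₁ (g s (ρ₁ s) (q₁ s)) s)
    (hρ₂ : ∀ s ∈ Set.Icc (0:ℝ) T, HasDerivAt ρ₂ (g s (ρ₂ s) (q₂ s)) s)
    (t : ℝ) (ht : t ∈ Set.Icc (0:ℝ) T)
    (h0 : ρ₁ 0 ≤ ρ₂ 0)
    (hq : ∀ s ∈ Set.Icc 0 t, q₁ s ≤ q₂ s) :
    ρ₁ t ≤ ρ₂ t := by
  have hIcc : Set.Icc 0 t ⊆ Set.Icc 0 T := Set.Icc_subset_Icc_right ht.2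
  have hIco : Set.Ico 0 t ⊆ Set.Icc 0 T := Set.Ico_subset_Icc_self.trans hIcc
  have habar_nonneg := fun s hs e he => ((habar e he).2 s (hIco hs)).le
  have haund_nonneg := fun s hs e he => ((haund e he).2 s (hIco hs)).le
  obtain rfl : A = fun j s => nodalActuation E (abar · s) (aund · s) j := funext₂ hA
  obtain rfl : g = fun s => nodalVelocity E ℓ (fun j => 2 / (ℓ * nodalActuation E _ _ j))
      (fun j => deriv (fun s => nodalActuation E _ _ j) s / nodalActuation E _ _ j)
      (abar · s) (aund · s) (f · s) := by
    funext s ρ q j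
    exact hg s ρ q j
  exact nodal_dynamics_monotone_in_injections_general hℓ
    (fun s hs j => div_nonneg zero_le_two
      (mul_nonneg hℓ.le (nodalActuation_nonneg (habar_nonneg s hs) (haund_nonneg s hs) j)))
    habar_nonneg haund_nonneg
    (fun s hs e he u => (strictMono_of_deriv_pos (hf_incr e he s (hIco hs) u)).monotone)
    (fun _ => ⟨K, fun s hs => (hLip s (hIco hs) (q₂ s)).lipschitzOnWith⟩)
    (HasDerivAt.continuousOn fun s hs => hρ₁ s (hIcc hs))
    (fun s hs => (hρ₁ s (hIco hs)).hasDerivWithinAt)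
    (HasDerivAt.continuousOn fun s hs => hρ₂ s (hIcc hs))
    (fun s hs => (hρ₂ s (hIco hs)).hasDerivWithinAt)
    h0 (fun s hs => hq s (Set.Ico_subset_Icc_self hs)) t (Set.right_mem_Icc.2 ht.1)
end

section
/- (Intermediate claim in Corollary 1: positivity and Metzler structure under local feedback.) Suppose each dissipation function f_{ij}(t,u,v) is differentiable and strictly increasing in its last argument, i.e. ∂f_{ij}/∂v(t,u,v) > 0, and suppose the feedback gain functions satisfy v·k̲′_{ij}(v) + k̲_{ij}(v) > 0 and v·k̄′_{ij}(v) + k̄_{ij}(v) > 0 for all edges (i,j) ∈ E and all v ≥ 0. Then: (a) r_j(v) := k_j(v) + k_j′(v)·v > 0 for all nodes j and all v ≥ 0, where k_j(v) = Σ_{i∈∂₊j} k̄_{ij}(v) + Σ_{k∈∂₋j} k̲_{jk}(v); and (b) at every point (t,ρ,q) with ρ ∈ ℝ₊^V, the Jacobian of the closed-loop nodal dynamics with respect to ρ is Metzler (all off-diagonal partial derivatives ∂g_j/∂ρ_i, i ≠ j, are nonnegative) and the Jacobian with respect to q is entrywise nonnegative. -/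
/-!
The number `r_j(v)` is the derivative of `v ↦ k_j(v) * v`, hence additive in the gains: it is the
sum of the derivatives of `v ↦ k(v) * v` over the gains `k` of the edges at `j`, all positive.
For `i ≠ j` the density at `i` enters `g_j` only through the last argument of the dissipation on
`(j, i)` and on `(i, j)`. In the first it occurs as `k̄(ρ_i) * ρ_i` with a plus sign; in the second
as `k̲(ρ_i) * ρ_i` with a minus sign, which cancels the minus sign of the outflow. So `g_j` is
obtained from functions of `ρ_i` with nonnegative derivative by sums, compositions and nonnegative
scalings.
-/

open Function

section MarginalGain

variable {𝕜 : Type*} [NontriviallyNormedField 𝕜]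

/-- The marginal gain `k v + k' v * v`, i.e. the derivative at `v` of the actuated density
`w ↦ k w * w`. It is spelled like the paper's `r_j`. -/
noncomputable def marginalGain (k : 𝕜 → 𝕜) (v : 𝕜) : 𝕜 :=
  k v + deriv k v * v

theorem marginalGain_eq (k : 𝕜 → 𝕜) (v : 𝕜) : marginalGain k v = v * deriv k v + k v := by
  rw [marginalGain, add_comm, mul_comm]

theorem hasDerivAt_mul_self {k : 𝕜 → 𝕜} {v : 𝕜} (hk : DifferentiableAt 𝕜 k v) :
    HasDerivAt (fun w => k w * w) (marginalGain k v) v :=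
  (hk.hasDerivAt.fun_mul (hasDerivAt_id' v)).congr_deriv (by rw [marginalGain]; ring)

theorem marginalGain_add {k l : 𝕜 → 𝕜} {v : 𝕜} (hk : DifferentiableAt 𝕜 k v)
    (hl : DifferentiableAt 𝕜 l v) :
    marginalGain (fun w => k w + l w) v = marginalGain k v + marginalGain l v := by
  simp only [marginalGain, deriv_fun_add hk hl]
  ring

theorem marginalGain_sum {ι : Type*} {s : Finset ι} {k : ι → 𝕜 → 𝕜} {v : 𝕜}
    (hk : ∀ i ∈ s, DifferentiableAt 𝕜 (k i) v) :
    marginalGain (fun w => ∑ i ∈ s, k i w) v = ∑ i ∈ s, marginalGain (k i) v := by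
  simp only [marginalGain, deriv_fun_sum hk, Finset.sum_mul, Finset.sum_add_distrib]

end MarginalGain

/-- `F` is differentiable at `x` with a nonnegative derivative. Differentiability is part of the
notion because `deriv F x = 0` where `F` is not differentiable. -/
structure HasNonnegDerivAt (F : ℝ → ℝ) (x : ℝ) : Prop where
  differentiableAt : DifferentiableAt ℝ F x
  deriv_nonneg : 0 ≤ deriv F x

namespace HasNonnegDerivAt

variable {F G : ℝ → ℝ} {x : ℝ}

theorem of_hasDerivAt {d : ℝ} (h : HasDerivAt F d x) (hd : 0 ≤ d) : HasNonnegDerivAt F x :=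
  ⟨h.differentiableAt, h.deriv.symm ▸ hd⟩

theorem const (c x : ℝ) : HasNonnegDerivAt (fun _ => c) x :=
  of_hasDerivAt (hasDerivAt_const x c) le_rfl

theorem add (hF : HasNonnegDerivAt F x) (hG : HasNonnegDerivAt G x) :
    HasNonnegDerivAt (fun s => F s + G s) x :=
  of_hasDerivAt (hF.differentiableAt.hasDerivAt.fun_add hG.differentiableAt.hasDerivAt)
    (add_nonneg hF.deriv_nonneg hG.deriv_nonneg)

theorem sum {ι : Type*} {S : Finset ι} {H : ι → ℝ → ℝ}
    (hH : ∀ i ∈ S, HasNonnegDerivAt (H i) x) : HasNonnegDerivAt (fun s => ∑ i ∈ S, H i s) x :=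
  of_hasDerivAt (HasDerivAt.fun_sum fun i hi => (hH i hi).differentiableAt.hasDerivAt)
    (Finset.sum_nonneg fun i hi => (hH i hi).deriv_nonneg)

theorem const_mul {c : ℝ} (hc : 0 ≤ c) (hF : HasNonnegDerivAt F x) :
    HasNonnegDerivAt (fun s => c * F s) x :=
  of_hasDerivAt (hF.differentiableAt.hasDerivAt.const_mul c) (mul_nonneg hc hF.deriv_nonneg)

theorem sub_const_div_const {ℓ : ℝ} (hF : HasNonnegDerivAt F x) (c : ℝ) (hℓ : 0 ≤ ℓ) :
    HasNonnegDerivAt (fun s => (F s - c) / ℓ) x :=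
  of_hasDerivAt ((hF.differentiableAt.hasDerivAt.sub_const c).div_const ℓ)
    (div_nonneg hF.deriv_nonneg hℓ)

theorem comp (hF : HasNonnegDerivAt F (G x)) (hG : HasNonnegDerivAt G x) :
    HasNonnegDerivAt (fun s => F (G s)) x :=
  of_hasDerivAt (hF.differentiableAt.hasDerivAt.comp x hG.differentiableAt.hasDerivAt)
    (mul_nonneg hF.deriv_nonneg hG.deriv_nonneg)

theorem neg_comp_neg (hF : HasNonnegDerivAt F (-x)) : HasNonnegDerivAt (fun s => -F (-s)) x :=
  of_hasDerivAt
    ((hF.differentiableAt.hasDerivAt.comp x (hasDerivAt_neg x)).fun_neg.congr_deriv (by ring))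
    hF.deriv_nonneg

theorem mul_self {k : ℝ → ℝ} {v : ℝ} (hk : DifferentiableAt ℝ k v) (hv : 0 ≤ marginalGain k v) :
    HasNonnegDerivAt (fun w => k w * w) v :=
  of_hasDerivAt (hasDerivAt_mul_self hk) hv

theorem update_apply {V : Type*} [DecidableEq V] (ρ : V → ℝ) (i k : V) (x : ℝ) :
    HasNonnegDerivAt (fun s => update ρ i s k) x := by
  obtain rfl | hki := eq_or_ne k i
  · simpa only [update_self] using of_hasDerivAt (hasDerivAt_id' x) zero_le_one
  · simpa only [update_of_ne hki] using const (ρ k) x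

theorem comp_update {V : Type*} [DecidableEq V] {ρ : V → ℝ} {k : V}
    (hF : HasNonnegDerivAt F (ρ k)) (i : V) :
    HasNonnegDerivAt (fun s => F (update ρ i s k)) (ρ i) :=
  comp (by rwa [update_eq_self]) (update_apply ρ i k (ρ i))

end HasNonnegDerivAt

section ClosedLoop

variable {V : Type*} [Fintype V] [DecidableEq V] {E : Finset (V × V)} {ℓ : ℝ}
  {φ : V × V → ℝ → ℝ → ℝ} {kbar kund : V × V → ℝ → ℝ}

/-- The aggregated gain `k_j(v)`, the sum of the gains actuated at node `j`: those of `kbar` on the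
edges entering `j` and those of `kund` on the edges leaving `j`. -/
def nodalGain (E : Finset (V × V)) (kbar kund : V × V → ℝ → ℝ) (j : V) (v : ℝ) : ℝ :=
  (∑ i with (i, j) ∈ E, kbar (i, j) v) + ∑ k with (j, k) ∈ E, kund (j, k) v

/-- The difference of the two sums of dissipation terms in the dynamics of node `j`, at one instant:
`φ e u w` is the dissipation function `f e t u w` at a fixed time `t`. -/
noncomputable def netInflow (E : Finset (V × V)) (ℓ : ℝ) (φ : V × V → ℝ → ℝ → ℝ)
    (kbar kund : V × V → ℝ → ℝ) (ρ : V → ℝ) (j : V) : ℝ :=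
  (∑ k with (j, k) ∈ E, φ (j, k) (kund (j, k) (ρ j) * ρ j)
      ((kbar (j, k) (ρ k) * ρ k - kund (j, k) (ρ j) * ρ j) / ℓ)) -
    ∑ i with (i, j) ∈ E, φ (i, j) (kbar (i, j) (ρ j) * ρ j)
      ((kbar (i, j) (ρ j) * ρ j - kund (i, j) (ρ i) * ρ i) / ℓ)

/-- The right-hand side `g_j` of the closed-loop nodal dynamics, at one instant: `φ` and `q` are the
dissipation functions and the injections at a fixed time. -/
noncomputable def closedLoopRate (E : Finset (V × V)) (ℓ : ℝ) (φ : V × V → ℝ → ℝ → ℝ)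
    (kbar kund : V × V → ℝ → ℝ) (ρ q : V → ℝ) (j : V) : ℝ :=
  2 / (ℓ * marginalGain (nodalGain E kbar kund j) (ρ j)) *
    (netInflow E ℓ φ kbar kund ρ j + q j)

theorem marginalGain_nodalGain {v : ℝ} (hkbar : ∀ e ∈ E, DifferentiableAt ℝ (kbar e) v)
    (hkund : ∀ e ∈ E, DifferentiableAt ℝ (kund e) v) (j : V) :
    marginalGain (nodalGain E kbar kund j) v =
      (∑ i with (i, j) ∈ E, marginalGain (kbar (i, j)) v) +
        ∑ k with (j, k) ∈ E, marginalGain (kund (j, k)) v := by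
  have hin : ∀ i ∈ ({i | (i, j) ∈ E} : Finset V), DifferentiableAt ℝ (kbar (i, j)) v :=
    fun i hi => hkbar _ (Finset.mem_filter_univ i |>.1 hi)
  have hout : ∀ k ∈ ({k | (j, k) ∈ E} : Finset V), DifferentiableAt ℝ (kund (j, k)) v :=
    fun k hk => hkund _ (Finset.mem_filter_univ k |>.1 hk)
  rw [← marginalGain_sum hin, ← marginalGain_sum hout]
  exact marginalGain_add (DifferentiableAt.fun_sum hin) (DifferentiableAt.fun_sum hout)

theorem marginalGain_nodalGain_pos {v : ℝ} {j : V} (hj : (∃ i, (i, j) ∈ E) ∨ ∃ k, (j, k) ∈ E)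
    (hkbar : ∀ e ∈ E, DifferentiableAt ℝ (kbar e) v)
    (hkund : ∀ e ∈ E, DifferentiableAt ℝ (kund e) v)
    (hgain : ∀ e ∈ E, 0 < marginalGain (kund e) v ∧ 0 < marginalGain (kbar e) v) :
    0 < marginalGain (nodalGain E kbar kund j) v := by
  have hin : ∀ i ∈ ({i | (i, j) ∈ E} : Finset V), 0 < marginalGain (kbar (i, j)) v :=
    fun i hi => (hgain _ (Finset.mem_filter_univ i |>.1 hi)).2
  have hout : ∀ k ∈ ({k | (j, k) ∈ E} : Finset V), 0 < marginalGain (kund (j, k)) v :=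
    fun k hk => (hgain _ (Finset.mem_filter_univ k |>.1 hk)).1
  rw [marginalGain_nodalGain hkbar hkund]
  obtain ⟨i, hi⟩ | ⟨k, hk⟩ := hj
  · exact add_pos_of_pos_of_nonneg
      (Finset.sum_pos hin ⟨i, Finset.mem_filter_univ i |>.2 hi⟩)
      (Finset.sum_nonneg fun k hk => (hout k hk).le)
  · exact add_pos_of_nonneg_of_pos
      (Finset.sum_nonneg fun i hi => (hin i hi).le)
      (Finset.sum_pos hout ⟨k, Finset.mem_filter_univ k |>.2 hk⟩)

theorem hasNonnegDerivAt_netInflow_update {ρ : V → ℝ} {i j : V} (hji : j ≠ i) (hℓ : 0 ≤ ℓ)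
    (hφ : ∀ e ∈ E, ∀ u w, HasNonnegDerivAt (φ e u) w)
    (hkbar : ∀ e ∈ E, ∀ k, HasNonnegDerivAt (fun w => kbar e w * w) (ρ k))
    (hkund : ∀ e ∈ E, ∀ k, HasNonnegDerivAt (fun w => kund e w * w) (ρ k)) :
    HasNonnegDerivAt (fun s => netInflow E ℓ φ kbar kund (update ρ i s) j) (ρ i) := by
  simp only [netInflow, update_of_ne hji, sub_eq_add_neg (Finset.sum _ _), ← Finset.sum_neg_distrib]
  refine .add (.sum fun k hk => ?_) (.sum fun k hk => ?_)
  · have hE := Finset.mem_filter_univ k |>.1 hk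
    exact ((hφ _ hE _ _).comp ((hkbar _ hE k).sub_const_div_const _ hℓ)).comp_update i
  · have hE := Finset.mem_filter_univ k |>.1 hk
    have hout := ((hφ _ hE (kbar (k, j) (ρ j) * ρ j) _).neg_comp_neg.comp
      ((hkund _ hE k).sub_const_div_const (kbar (k, j) (ρ j) * ρ j) hℓ)).comp_update i
    simpa only [← neg_div, neg_sub] using hout

theorem hasNonnegDerivAt_closedLoopRate_update {ρ : V → ℝ} {i j : V} (hji : j ≠ i)
    (hscale : 0 ≤ 2 / (ℓ * marginalGain (nodalGain E kbar kund j) (ρ j)))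
    (hflow : HasNonnegDerivAt (fun s => netInflow E ℓ φ kbar kund (update ρ i s) j) (ρ i))
    (q : V → ℝ) :
    HasNonnegDerivAt (fun s => closedLoopRate E ℓ φ kbar kund (update ρ i s) q j) (ρ i) := by
  simp only [closedLoopRate, update_of_ne hji]
  exact (hflow.add (.const (q j) _)).const_mul hscale

theorem hasNonnegDerivAt_closedLoopRate_update_injection {ρ : V → ℝ} {j : V}
    (hscale : 0 ≤ 2 / (ℓ * marginalGain (nodalGain E kbar kund j) (ρ j))) (q : V → ℝ) (m : V)
    (x : ℝ) :
    HasNonnegDerivAt (fun s => closedLoopRate E ℓ φ kbar kund ρ (update q m s) j) x :=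
  ((HasNonnegDerivAt.const _ _).add (.update_apply q m j x)).const_mul hscale

end ClosedLoop

theorem closed_loop_positivity_and_metzler_general {V : Type*} [Fintype V] [DecidableEq V]
    {E : Finset (V × V)} (hE_inc : ∀ j : V, (∃ i, (i, j) ∈ E) ∨ (∃ k, (j, k) ∈ E))
    {ℓ : ℝ} (hℓ : 0 < ℓ) {times : Set ℝ} {f : V × V → ℝ → ℝ → ℝ → ℝ}
    (hf : ∀ e ∈ E, ∀ t ∈ times, ∀ u w, HasNonnegDerivAt (f e t u) w)
    {kbar kund : V × V → ℝ → ℝ}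
    (hkbar : ∀ e ∈ E, ∀ v, 0 ≤ v → DifferentiableAt ℝ (kbar e) v)
    (hkund : ∀ e ∈ E, ∀ v, 0 ≤ v → DifferentiableAt ℝ (kund e) v)
    (hgain : ∀ e ∈ E, ∀ v, 0 ≤ v → 0 < marginalGain (kund e) v ∧ 0 < marginalGain (kbar e) v) :
    (∀ j v, 0 ≤ v → 0 < marginalGain (nodalGain E kbar kund j) v) ∧
    (∀ t ∈ times, ∀ ρ q : V → ℝ, (∀ j, 0 ≤ ρ j) →
      (∀ j i, j ≠ i →
        0 ≤ deriv (fun s => closedLoopRate E ℓ (f · t) kbar kund (update ρ i s) q j) (ρ i)) ∧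
      (∀ j m,
        0 ≤ deriv (fun s => closedLoopRate E ℓ (f · t) kbar kund ρ (update q m s) j) (q m))) := by
  have hpos : ∀ j v, 0 ≤ v → 0 < marginalGain (nodalGain E kbar kund j) v := fun j v hv =>
    marginalGain_nodalGain_pos (hE_inc j) (hkbar · · v hv) (hkund · · v hv) (hgain · · v hv)
  refine ⟨hpos, fun t ht ρ q hρ => ?_⟩
  have hscale : ∀ j, 0 ≤ 2 / (ℓ * marginalGain (nodalGain E kbar kund j) (ρ j)) := fun j =>
    div_nonneg zero_le_two (mul_pos hℓ (hpos j _ (hρ j))).le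
  have hflow : ∀ j i, j ≠ i →
      HasNonnegDerivAt (fun s => netInflow E ℓ (f · t) kbar kund (update ρ i s) j) (ρ i) :=
    fun j i hji => hasNonnegDerivAt_netInflow_update hji hℓ.le (hf · · t ht)
      (fun e he k => .mul_self (hkbar e he _ (hρ k)) (hgain e he _ (hρ k)).2.le)
      (fun e he k => .mul_self (hkund e he _ (hρ k)) (hgain e he _ (hρ k)).1.le)
  exact ⟨fun j i hji =>
      (hasNonnegDerivAt_closedLoopRate_update hji (hscale j) (hflow j i hji) q).deriv_nonneg,
    fun j m =>
      (hasNonnegDerivAt_closedLoopRate_update_injection (hscale j) q m (q m)).deriv_nonneg⟩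

/-- Intermediate claim in Corollary 1: under the feedback gain conditions, (a) the
denominators `r_j(v) = k_j(v) + k_j'(v)·v` are strictly positive on ℝ₊, and (b) on the
nonnegative orthant the Jacobian of the closed-loop nodal dynamics with respect to the state
is Metzler and the Jacobian with respect to the injections is entrywise nonnegative. -/
theorem closed_loop_positivity_and_metzler
    (V : Type*) [Fintype V] [DecidableEq V]
    (E : Finset (V × V))
    (hE_noloop : ∀ e ∈ E, e.1 ≠ e.2)
    (hE_inc : ∀ j : V, (∃ i, (i, j) ∈ E) ∨ (∃ k, (j, k) ∈ E))
    (ℓ T : ℝ) (hℓ : 0 < ℓ) (hT : 0 < T)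
    -- differentiable dissipation functions f_{ij}(t,u,v)
    (f : V × V → ℝ → ℝ → ℝ → ℝ)
    (hf : ∀ e ∈ E, Differentiable ℝ (fun z : ℝ × ℝ × ℝ => f e z.1 z.2.1 z.2.2))
    -- each dissipation function is strictly increasing in its last argument
    (hf_incr : ∀ e ∈ E, ∀ t ∈ Set.Icc (0:ℝ) T, ∀ u v : ℝ,
      0 < deriv (fun w : ℝ => f e t u w) v)
    -- differentiable local feedback gain functions k̄ (kbar) and k̲ (kund), ℝ₊ → ℝ₊
    (kbar kund : V × V → ℝ → ℝ)
    (hkbar : ∀ e ∈ E, Differentiable ℝ (kbar e) ∧ ∀ v : ℝ, 0 ≤ v → 0 ≤ kbar e v)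
    (hkund : ∀ e ∈ E, Differentiable ℝ (kund e) ∧ ∀ v : ℝ, 0 ≤ v → 0 ≤ kund e v)
    -- the feedback gain conditions of Corollary 1
    (hgain : ∀ e ∈ E, ∀ v : ℝ, 0 ≤ v →
      0 < v * deriv (kund e) v + kund e v ∧ 0 < v * deriv (kbar e) v + kbar e v)
    -- aggregated gain k_j(v) and r_j(v) = k_j(v) + k_j'(v)·v
    (kagg : V → ℝ → ℝ)
    (hkagg : ∀ (j : V) (v : ℝ), kagg j v =
      (∑ i ∈ Finset.univ.filter (fun i : V => (i, j) ∈ E), kbar (i, j) v) +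
      (∑ k ∈ Finset.univ.filter (fun k : V => (j, k) ∈ E), kund (j, k) v))
    (r : V → ℝ → ℝ)
    (hr : ∀ (j : V) (v : ℝ), r j v = kagg j v + deriv (kagg j) v * v)
    -- the closed-loop nodal dynamics ρ̇_j = g_j(t, ρ, q)
    (g : ℝ → (V → ℝ) → (V → ℝ) → V → ℝ)
    (hg : ∀ (t : ℝ) (ρ qv : V → ℝ) (j : V), g t ρ qv j =
      (2 / (ℓ * r j (ρ j))) *
        ((∑ k ∈ Finset.univ.filter (fun k : V => (j, k) ∈ E),
            f (j, k) t (kund (j, k) (ρ j) * ρ j)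
              ((kbar (j, k) (ρ k) * ρ k - kund (j, k) (ρ j) * ρ j) / ℓ)) -
         (∑ i ∈ Finset.univ.filter (fun i : V => (i, j) ∈ E),
            f (i, j) t (kbar (i, j) (ρ j) * ρ j)
              ((kbar (i, j) (ρ j) * ρ j - kund (i, j) (ρ i) * ρ i) / ℓ)) +
         qv j))
    :
    (∀ (j : V) (v : ℝ), 0 ≤ v → 0 < r j v) ∧
    (∀ t ∈ Set.Icc (0:ℝ) T, ∀ ρ qv : V → ℝ, (∀ j : V, 0 ≤ ρ j) →
      (∀ j i : V, j ≠ i →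
        0 ≤ deriv (fun s : ℝ => g t (Function.update ρ i s) qv j) (ρ i)) ∧
      (∀ j m : V,
        0 ≤ deriv (fun s : ℝ => g t ρ (Function.update qv m s) j) (qv m))) := by
  simp only [hg, hr, show ∀ j, kagg j = nodalGain E kbar kund j from fun j => funext (hkagg j)]
  exact closed_loop_positivity_and_metzler_general hE_inc hℓ
    (fun e he t ht u w => have h := hf_incr e he t ht u w
      ⟨differentiableAt_of_deriv_ne_zero h.ne', h.le⟩)
    (fun e he v _ => (hkbar e he).1 v) (fun e he v _ => (hkund e he).1 v)
    (by simpa only [marginalGain_eq] using hgain)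
end

section
/- (Robust feasibility under injection uncertainty, Section V.) Suppose each dissipation function f_{ij}(t,u,v) is differentiable and strictly increasing in its last argument, i.e. ∂f_{ij}/∂v(t,u,v) > 0, and suppose the right-hand side g(t,·,q(t)) is Lipschitz in ρ so that solutions are unique. Let q̲, q̄ : [0,T] → ℝ^V be continuous lower and upper injection bounds with solutions ρ̲ and ρ̄ of the nodal network flow dynamics (with the same compression ratio functions), and let ρ_min, ρ_max ∈ ℝ^V satisfy ρ_min ≤ ρ̲(t) and ρ̄(t) ≤ ρ_max componentwise for all t ∈ [0,T]. Then for every continuous injection vector q with q̲(t) ≤ q(t) ≤ q̄(t) componentwise for all t ∈ [0,T], and every initial condition ρ(0) with ρ̲(0) ≤ ρ(0) ≤ ρ̄(0) componentwise, the corresponding solution ρ satisfies ρ_min ≤ ρ(t) ≤ ρ_max componentwise for all t ∈ [0,T]. -/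
/-!
The nodal vector field is *quasimonotone* in the densities: its `j`-th component depends on the
densities of the neighbours of `j` only through terms that increase with them, because dissipation
increases with the density gradient. Let `x` be a subsolution and `y` a supersolution of a
quasimonotone `K`-Lipschitz system, and put `φ = ‖(x - y)⁺‖` in the sup norm. Where a component
attains `x j - y j = φ`, we have `x ≤ y + φ` with equality at `j`, so that
`F x j ≤ F (y + φ) j ≤ F y j + K φ`. Hence `φ' ≤ K φ` for the upper right derivative, and `φ = 0` by
Grönwall's inequality if `φ` vanishes initially. Enlarging the injection enlarges the vector field,
so the solution is squeezed between the two extreme ones.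
-/

open Set Filter Topology

section Quasimonotone

variable {ι : Type*}

/-- The Kamke–Müller condition on an autonomous vector field: raising the state without changing
its `i`-th coordinate does not lower the `i`-th component of the field. -/
def IsQuasimonotone (F : (ι → ℝ) → ι → ℝ) : Prop :=
  ∀ ⦃x y : ι → ℝ⦄ ⦃i : ι⦄, x ≤ y → x i = y i → F x i ≤ F y i

variable [Fintype ι]

theorem apply_le_norm_posPart (u : ι → ℝ) (i : ι) : u i ≤ ‖u⁺‖ := calc
  u i ≤ u⁺ i := le_posPart u i
  _ ≤ ‖u⁺ i‖ := Real.le_norm_self _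
  _ ≤ ‖u⁺‖ := norm_le_pi_norm _ i

theorem IsQuasimonotone.sub_le_mul_norm_posPart {F : (ι → ℝ) → ι → ℝ} {K : NNReal}
    (hF : IsQuasimonotone F) (hLip : LipschitzWith K F) {x y : ι → ℝ} {i : ι}
    (hi : x i - y i = ‖(x - y)⁺‖) : F x i - F y i ≤ K * ‖(x - y)⁺‖ := by
  set φ : ι → ℝ := Function.const ι ‖(x - y)⁺‖
  have h_raise : F x i ≤ F (y + φ) i :=
    hF (fun k ↦ sub_le_iff_le_add'.1 (apply_le_norm_posPart (x - y) k)) (sub_eq_iff_eq_add'.1 hi)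
  have hφ : ‖φ‖ ≤ ‖(x - y)⁺‖ := (pi_norm_const_le ‖(x - y)⁺‖).trans_eq (norm_norm _)
  calc F x i - F y i ≤ F (y + φ) i - F y i := sub_le_sub_right h_raise _
    _ ≤ ‖F (y + φ) - F y‖ := (Real.le_norm_self _).trans (norm_le_pi_norm (F (y + φ) - F y) i)
    _ ≤ K * ‖(y + φ) - y‖ := hLip.norm_sub_le _ _
    _ ≤ K * ‖(x - y)⁺‖ := by rw [add_sub_cancel_left]; gcongr

/-- Only the components realizing the sup norm matter: by continuity the others stay below it for a
short time. -/
theorem eventually_slope_norm_posPart_lt {u : ℝ → ι → ℝ} {u' : ι → ℝ} {t r : ℝ}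
    (hu : HasDerivWithinAt u u' (Ici t) t) (hr : 0 < r)
    (hu' : ∀ i, u t i = ‖(u t)⁺‖ → u' i < r) :
    ∀ᶠ s in 𝓝[>] t, slope (fun s ↦ ‖(u s)⁺‖) t s < r := by
  set m := ‖(u t)⁺‖
  have h_component (i : ι) : ∀ᶠ s in 𝓝[>] t, u s i < m + r * (s - t) := by
    have hui := (hasDerivWithinAt_pi.1 hu i).Ioi_of_Ici
    rcases (apply_le_norm_posPart (u t) i).eq_or_lt with h_active | h_inactive
    · filter_upwards [hui.limsup_slope_le' self_notMem_Ioi (hu' i h_active), self_mem_nhdsWithin]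
        with s hs hts
      rw [slope_def_field, div_lt_iff₀ (sub_pos.2 hts), h_active] at hs
      linarith
    · filter_upwards [hui.continuousWithinAt.eventually_lt_const h_inactive, self_mem_nhdsWithin]
        with s hs hts
      exact hs.trans (lt_add_of_pos_right m (mul_pos hr (sub_pos.2 hts)))
  filter_upwards [eventually_all.2 h_component, self_mem_nhdsWithin] with s hs hts
  have h_pos : 0 < m + r * (s - t) :=
    add_pos_of_nonneg_of_pos (norm_nonneg _) (mul_pos hr (sub_pos.2 hts))
  have h_norm : ‖(u s)⁺‖ < m + r * (s - t) := (pi_norm_lt_iff h_pos).2 fun i ↦ by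
    rw [Pi.posPart_apply, Real.norm_of_nonneg (posPart_nonneg _)]
    exact posPart_lt.2 ⟨hs i, h_pos⟩
  rw [slope_def_field, div_lt_iff₀ (sub_pos.2 hts)]
  exact sub_lt_iff_lt_add'.2 h_norm

variable {F G : ℝ → (ι → ℝ) → ι → ℝ} {K : NNReal} {a b : ℝ} {x y x' y' : ℝ → ι → ℝ}

theorem le_of_subsolution_of_supersolution
    (hF : ∀ t ∈ Ico a b, IsQuasimonotone (F t)) (hLip : ∀ t ∈ Ico a b, LipschitzWith K (F t))
    (hx : ContinuousOn x (Icc a b)) (hy : ContinuousOn y (Icc a b))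
    (hx' : ∀ t ∈ Ico a b, HasDerivWithinAt x (x' t) (Ici t) t)
    (hy' : ∀ t ∈ Ico a b, HasDerivWithinAt y (y' t) (Ici t) t)
    (h_sub : ∀ t ∈ Ico a b, x' t ≤ F t (x t)) (h_super : ∀ t ∈ Ico a b, F t (y t) ≤ y' t)
    (ha : x a ≤ y a) : ∀ t ∈ Icc a b, x t ≤ y t := by
  set φ : ℝ → ℝ := fun t ↦ ‖((x - y) t)⁺‖
  have hφ_cont : ContinuousOn φ (Icc a b) := (continuousOn_pi.2 fun i ↦
    (continuousOn_pi.1 (hx.sub hy) i).sup continuousOn_const).norm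
  have hφ_init : φ a ≤ 0 := by
    simp only [φ, Pi.sub_apply, posPart_eq_zero.2 (sub_nonpos.2 ha), norm_zero, le_refl]
  have hφ_slope : ∀ t ∈ Ico a b, ∀ r, K * φ t < r →
      ∃ᶠ s in 𝓝[>] t, (s - t)⁻¹ * (φ s - φ t) < r := by
    intro t ht r hr
    have hr_pos : 0 < r := (mul_nonneg K.2 (norm_nonneg _)).trans_lt hr
    refine (eventually_slope_norm_posPart_lt ((hx' t ht).sub (hy' t ht)) hr_pos
      fun i hi ↦ lt_of_le_of_lt ?_ hr).frequently
    calc x' t i - y' t i ≤ F t (x t) i - F t (y t) i :=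
          sub_le_sub (h_sub t ht i) (h_super t ht i)
      _ ≤ K * φ t := (hF t ht).sub_le_mul_norm_posPart (hLip t ht) hi
  intro t ht
  have hφ_le : φ t ≤ 0 := by
    simpa only [gronwallBound_ε0_δ0] using
      le_gronwallBound_of_liminf_deriv_right_le hφ_cont hφ_slope hφ_init
        (fun s _ ↦ (add_zero (K * φ s)).ge) t ht
  exact sub_nonpos.1 (posPart_eq_zero.1 (norm_le_zero_iff.1 hφ_le))

theorem le_of_isIntegralCurveOn_of_quasimonotone
    (hF : ∀ t ∈ Ico a b, IsQuasimonotone (F t)) (hLip : ∀ t ∈ Ico a b, LipschitzWith K (F t))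
    (hFG : ∀ t ∈ Ico a b, F t (y t) ≤ G t (y t))
    (hx : IsIntegralCurveOn x F (Icc a b)) (hy : IsIntegralCurveOn y G (Icc a b))
    (ha : x a ≤ y a) : ∀ t ∈ Icc a b, x t ≤ y t :=
  le_of_subsolution_of_supersolution hF hLip hx.continuousOn hy.continuousOn
    (fun t ht ↦ (hx t (Ico_subset_Icc_self ht)).mono_of_mem_nhdsWithin (Icc_mem_nhdsGE_of_mem ht))
    (fun t ht ↦ (hy t (Ico_subset_Icc_self ht)).mono_of_mem_nhdsWithin (Icc_mem_nhdsGE_of_mem ht))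
    (fun _ _ ↦ le_rfl) hFG ha

end Quasimonotone

section NodalFlow

variable {V : Type*} [Fintype V] [DecidableEq V]

/-- The nodal network flow vector field at a fixed time, as a function of the injection `q` and the
density `ρ`. The compression ratios `ᾱ` and `α̲` are `abar` and `aund`; the factors `2 / (ℓ α_j)`
and `α̇_j / α_j` of the physical model appear as arbitrary coefficients `c j` and `d j`. -/
noncomputable def nodalFlow (E : Finset (V × V)) (ℓ : ℝ) (abar aund : V × V → ℝ)
    (f : V × V → ℝ → ℝ → ℝ) (c d q ρ : V → ℝ) (j : V) : ℝ :=
  c j *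
    ((∑ k ∈ Finset.univ.filter (fun k : V ↦ (j, k) ∈ E),
        f (j, k) (aund (j, k) * ρ j) ((abar (j, k) * ρ k - aund (j, k) * ρ j) / ℓ)) -
      (∑ i ∈ Finset.univ.filter (fun i : V ↦ (i, j) ∈ E),
        f (i, j) (abar (i, j) * ρ j) ((abar (i, j) * ρ j - aund (i, j) * ρ i) / ℓ)) +
      q j) -
    d j * ρ j

theorem monotone_nodalFlow (E : Finset (V × V)) (ℓ : ℝ) (abar aund : V × V → ℝ)
    (f : V × V → ℝ → ℝ → ℝ) {c : V → ℝ} (d : V → ℝ) (hc : 0 ≤ c) :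
    Monotone (nodalFlow E ℓ abar aund f c d) := fun _ _ hq _ j ↦
  sub_le_sub_right (mul_le_mul_of_nonneg_left (add_le_add_right (hq j) _) (hc j)) _

theorem isQuasimonotone_nodalFlow {E : Finset (V × V)} {ℓ : ℝ} {abar aund : V × V → ℝ}
    {f : V × V → ℝ → ℝ → ℝ} {c : V → ℝ} (hℓ : 0 < ℓ) (habar : ∀ e ∈ E, 0 ≤ abar e)
    (haund : ∀ e ∈ E, 0 ≤ aund e) (hf : ∀ e ∈ E, ∀ u, Monotone (f e u)) (hc : 0 ≤ c)
    (d q : V → ℝ) : IsQuasimonotone (nodalFlow E ℓ abar aund f c d q) := by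
  intro x y j hxy hj
  simp only [nodalFlow, hj]
  refine sub_le_sub_right (mul_le_mul_of_nonneg_left (add_le_add_left (sub_le_sub
    (Finset.sum_le_sum fun k hk ↦ ?inflow) (Finset.sum_le_sum fun i hi ↦ ?outflow)) _) (hc j)) _
  case inflow =>
    have he : (j, k) ∈ E := (Finset.mem_filter.1 hk).2
    refine hf _ he _ (div_le_div_of_nonneg_right (sub_le_sub_right ?_ _) hℓ.le)
    exact mul_le_mul_of_nonneg_left (hxy k) (habar _ he)
  case outflow =>
    have he : (i, j) ∈ E := (Finset.mem_filter.1 hi).2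
    refine hf _ he _ (div_le_div_of_nonneg_right (sub_le_sub_left ?_ _) hℓ.le)
    exact mul_le_mul_of_nonneg_left (hxy i) (haund _ he)

variable {E : Finset (V × V)} {ℓ a b : ℝ} {abar aund : ℝ → V × V → ℝ}
  {f : ℝ → V × V → ℝ → ℝ → ℝ} {c d : ℝ → V → ℝ} {K : NNReal}

theorem nodalFlow_order_propagation (hℓ : 0 < ℓ)
    (habar : ∀ t ∈ Icc a b, ∀ e ∈ E, 0 ≤ abar t e) (haund : ∀ t ∈ Icc a b, ∀ e ∈ E, 0 ≤ aund t e)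
    (hf : ∀ t ∈ Icc a b, ∀ e ∈ E, ∀ u, Monotone (f t e u)) (hc : ∀ t ∈ Icc a b, 0 ≤ c t)
    (hLip : ∀ t ∈ Icc a b, ∀ q,
      LipschitzWith K (nodalFlow E ℓ (abar t) (aund t) (f t) (c t) (d t) q))
    {q₁ q₂ ρ₁ ρ₂ : ℝ → V → ℝ} (hq : ∀ t ∈ Icc a b, q₁ t ≤ q₂ t)
    (hρ₁ : IsIntegralCurveOn ρ₁
      (fun t ↦ nodalFlow E ℓ (abar t) (aund t) (f t) (c t) (d t) (q₁ t)) (Icc a b))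
    (hρ₂ : IsIntegralCurveOn ρ₂
      (fun t ↦ nodalFlow E ℓ (abar t) (aund t) (f t) (c t) (d t) (q₂ t)) (Icc a b))
    (ha : ρ₁ a ≤ ρ₂ a) : ∀ t ∈ Icc a b, ρ₁ t ≤ ρ₂ t := by
  refine le_of_isIntegralCurveOn_of_quasimonotone (fun t ht ↦ ?_)
    (fun t ht ↦ hLip t (Ico_subset_Icc_self ht) (q₁ t)) (fun t ht ↦ ?_) hρ₁ hρ₂ ha
  all_goals replace ht := Ico_subset_Icc_self ht
  · exact isQuasimonotone_nodalFlow hℓ (habar t ht) (haund t ht) (hf t ht) (hc t ht) (d t) (q₁ t)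
  · exact monotone_nodalFlow E ℓ _ _ _ (d t) (hc t ht) (hq t ht) (ρ₂ t)

theorem robust_feasibility_under_injection_uncertainty_general (hℓ : 0 < ℓ)
    (habar : ∀ t ∈ Icc a b, ∀ e ∈ E, 0 ≤ abar t e) (haund : ∀ t ∈ Icc a b, ∀ e ∈ E, 0 ≤ aund t e)
    (hf : ∀ t ∈ Icc a b, ∀ e ∈ E, ∀ u, Monotone (f t e u)) (hc : ∀ t ∈ Icc a b, 0 ≤ c t)
    (hLip : ∀ t ∈ Icc a b, ∀ q,
      LipschitzWith K (nodalFlow E ℓ (abar t) (aund t) (f t) (c t) (d t) q))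
    {qlo qhi q ρlo ρhi ρ : ℝ → V → ℝ} {ρmin ρmax : V → ℝ}
    (hρlo : IsIntegralCurveOn ρlo
      (fun t ↦ nodalFlow E ℓ (abar t) (aund t) (f t) (c t) (d t) (qlo t)) (Icc a b))
    (hρhi : IsIntegralCurveOn ρhi
      (fun t ↦ nodalFlow E ℓ (abar t) (aund t) (f t) (c t) (d t) (qhi t)) (Icc a b))
    (hρ : IsIntegralCurveOn ρ
      (fun t ↦ nodalFlow E ℓ (abar t) (aund t) (f t) (c t) (d t) (q t)) (Icc a b))
    (hbound_lo : ∀ t ∈ Icc a b, ρmin ≤ ρlo t) (hbound_hi : ∀ t ∈ Icc a b, ρhi t ≤ ρmax)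
    (hq : ∀ t ∈ Icc a b, qlo t ≤ q t ∧ q t ≤ qhi t) (ha : ρlo a ≤ ρ a ∧ ρ a ≤ ρhi a) :
    ∀ t ∈ Icc a b, ρmin ≤ ρ t ∧ ρ t ≤ ρmax := fun t ht ↦
  have h_lower : ρlo t ≤ ρ t := nodalFlow_order_propagation hℓ habar haund hf hc hLip
    (fun s hs ↦ (hq s hs).1) hρlo hρ ha.1 t ht
  have h_upper : ρ t ≤ ρhi t := nodalFlow_order_propagation hℓ habar haund hf hc hLip
    (fun s hs ↦ (hq s hs).2) hρ hρhi ha.2 t ht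
  ⟨(hbound_lo t ht).trans h_lower, h_upper.trans (hbound_hi t ht)⟩

end NodalFlow

/-- Robust feasibility under injection uncertainty (Section V): if the solutions for the
extreme injection profiles `q̲` and `q̄` respect the density bounds, then so does the
solution for any injection profile sandwiched between them, for any initial condition
sandwiched between the extreme initial conditions. -/
theorem robust_feasibility_under_injection_uncertainty
    (V : Type*) [Fintype V] [DecidableEq V]
    (E : Finset (V × V))
    (hE_noloop : ∀ e ∈ E, e.1 ≠ e.2)
    (hE_inc : ∀ j : V, (∃ i, (i, j) ∈ E) ∨ (∃ k, (j, k) ∈ E))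
    (ℓ T : ℝ) (hℓ : 0 < ℓ) (hT : 0 < T)
    -- compression ratio functions ᾱ (abar) and α̲ (aund), C¹ and strictly positive on [0,T]
    (abar aund : V × V → ℝ → ℝ)
    (habar : ∀ e ∈ E, ContDiff ℝ 1 (abar e) ∧ ∀ t ∈ Set.Icc (0:ℝ) T, 0 < abar e t)
    (haund : ∀ e ∈ E, ContDiff ℝ 1 (aund e) ∧ ∀ t ∈ Set.Icc (0:ℝ) T, 0 < aund e t)
    -- differentiable dissipation functions f_{ij}(t,u,v)
    (f : V × V → ℝ → ℝ → ℝ → ℝ)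
    (hf : ∀ e ∈ E, Differentiable ℝ (fun z : ℝ × ℝ × ℝ => f e z.1 z.2.1 z.2.2))
    -- aggregated nodal actuation α_j(t)
    (A : V → ℝ → ℝ)
    (hA : ∀ (j : V) (t : ℝ), A j t =
      (∑ i ∈ Finset.univ.filter (fun i : V => (i, j) ∈ E), abar (i, j) t) +
      (∑ k ∈ Finset.univ.filter (fun k : V => (j, k) ∈ E), aund (j, k) t))
    -- the nodal network flow dynamics ρ̇_j = g_j(t, ρ, q)
    (g : ℝ → (V → ℝ) → (V → ℝ) → V → ℝ)
    (hg : ∀ (t : ℝ) (ρ qv : V → ℝ) (j : V), g t ρ qv j =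
      (2 / (ℓ * A j t)) *
        ((∑ k ∈ Finset.univ.filter (fun k : V => (j, k) ∈ E),
            f (j, k) t (aund (j, k) t * ρ j)
              ((abar (j, k) t * ρ k - aund (j, k) t * ρ j) / ℓ)) -
         (∑ i ∈ Finset.univ.filter (fun i : V => (i, j) ∈ E),
            f (i, j) t (abar (i, j) t * ρ j)
              ((abar (i, j) t * ρ j - aund (i, j) t * ρ i) / ℓ)) +
         qv j) -
      (deriv (A j) t / A j t) * ρ j)
    -- each dissipation function is strictly increasing in its last argument
    (hf_incr : ∀ e ∈ E, ∀ t ∈ Set.Icc (0:ℝ) T, ∀ u v : ℝ,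
      0 < deriv (fun w : ℝ => f e t u w) v)
    -- Lipschitz continuity of the right-hand side in ρ (solutions are unique)
    (K : NNReal)
    (hLip : ∀ t ∈ Set.Icc (0:ℝ) T, ∀ qv : V → ℝ, LipschitzWith K (fun ρ => g t ρ qv))
    -- lower and upper injection bounds with corresponding solutions
    (qlo qhi : ℝ → V → ℝ) (hqlo : Continuous qlo) (hqhi : Continuous qhi)
    (ρlo ρhi : ℝ → V → ℝ)
    (hρlo : ∀ s ∈ Set.Icc (0:ℝ) T, HasDerivAt ρlo (g s (ρlo s) (qlo s)) s)
    (hρhi : ∀ s ∈ Set.Icc (0:ℝ) T, HasDerivAt ρhi (g s (ρhi s) (qhi s)) s)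
    -- density box constraints satisfied by the extreme solutions
    (ρmin ρmax : V → ℝ)
    (hbound_lo : ∀ t ∈ Set.Icc (0:ℝ) T, ρmin ≤ ρlo t)
    (hbound_hi : ∀ t ∈ Set.Icc (0:ℝ) T, ρhi t ≤ ρmax)
    -- an arbitrary sandwiched injection profile and its solution
    (q : ℝ → V → ℝ) (hqc : Continuous q)
    (hq : ∀ t ∈ Set.Icc (0:ℝ) T, qlo t ≤ q t ∧ q t ≤ qhi t)
    (ρ : ℝ → V → ℝ)
    (hρ : ∀ s ∈ Set.Icc (0:ℝ) T, HasDerivAt ρ (g s (ρ s) (q s)) s)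
    (h0 : ρlo 0 ≤ ρ 0 ∧ ρ 0 ≤ ρhi 0) :
    ∀ t ∈ Set.Icc (0:ℝ) T, ρmin ≤ ρ t ∧ ρ t ≤ ρmax := by
  have hA_nonneg : ∀ j, ∀ t ∈ Icc 0 T, 0 ≤ A j t := fun j t ht ↦ (hA j t).ge.trans' <| add_nonneg
    (Finset.sum_nonneg fun i hi ↦ ((habar _ (Finset.mem_filter.1 hi).2).2 t ht).le)
    (Finset.sum_nonneg fun k hk ↦ ((haund _ (Finset.mem_filter.1 hk).2).2 t ht).le)
  obtain rfl : g = fun t ρ q ↦ nodalFlow E ℓ (abar · t) (aund · t) (f · t)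
      (fun j ↦ 2 / (ℓ * A j t)) (fun j ↦ deriv (A j) t / A j t) q ρ := by
    funext t ρ q j
    exact hg t ρ q j
  exact robust_feasibility_under_injection_uncertainty_general
    (abar := fun t e ↦ abar e t) (aund := fun t e ↦ aund e t) (f := fun t e ↦ f e t) hℓ
    (fun t ht e he ↦ ((habar e he).2 t ht).le) (fun t ht e he ↦ ((haund e he).2 t ht).le)
    (fun t ht e he u ↦ (strictMono_of_deriv_pos (hf_incr e he t ht u)).monotone)
    (fun t ht j ↦ div_nonneg zero_le_two (mul_nonneg hℓ.le (hA_nonneg j t ht))) hLip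
    (fun t ht ↦ (hρlo t ht).hasDerivWithinAt) (fun t ht ↦ (hρhi t ht).hasDerivWithinAt)
    (fun t ht ↦ (hρ t ht).hasDerivWithinAt) hbound_lo hbound_hi hq h0
end
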